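/- Let g : ℝ → ℝ be a Schwartz function. Then there exists a Schwartz function f : ℝ → ℝ with g(x) = x · f′(x) for all x ∈ ℝ if and only if g(0) = 0 and ∫_ℝ g(x)/x dx = 0 (the integrand g(x)/x extends continuously across 0 since g(0) = 0, and is integrable). Consequently, {x ↦ x·f′(x) : f ∈ 𝒮(ℝ)} is a closed subspace of 𝒮(ℝ) of codimension two. (This is an instance of the main theorem for the action of the multiplicative group on ℝ by scaling, which has the three orbits {0}, ℝ₊, ℝ₋, the Lie algebra acting by the Euler operator x d/dx.) -/

import Mathlib

/-!
If `g = x f'` then `g(0) = 0` and `∫ g(x)/x dx = ∫ f' = 0`. Conversely, if `g(0) = 0`, then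
`g(x) = x h(x)` with `h(x) = ∫₀¹ g'(tx) dt` smooth, and `h` is Schwartz because the Leibniz rule
`(xh)⁽ⁿ⁺¹⁾ = x h⁽ⁿ⁺¹⁾ + (n+1) h⁽ⁿ⁾` controls its derivatives away from the origin. If moreover
`∫ h = 0`, then the primitive `f(x) = ∫_{-∞}^x h = -∫_x^∞ h` decays at both ends, so it is Schwartz,
and `g = x f'`.

Where `g(0) = 0`, the functional `∫ g(x)/x dx` is the restriction of the distribution `p.v. 1/x`,
which is continuous on the whole Schwartz space. Hence the range of the Euler operator is the kernel
of the continuous map `g ↦ (g(0), p.v. ∫ g(x)/x dx)`. For an even Schwartz function `φ` with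
`φ(0) = 1` and `∫ φ ≠ 0`, this map sends `φ v` to `(v, 0)` and `x φ w` to `(0, (∫ φ) w)`, so it is
surjective.
-/

open MeasureTheory

/-- The subspace `{x ↦ x·f′(x) : f ∈ 𝒮(ℝ)}` of `𝒮(ℝ)`: the image of the Euler
operator `x d/dx`, arising from the scaling action of the multiplicative group on `ℝ`. -/
noncomputable def eulerOperatorRange : Submodule ℝ (SchwartzMap ℝ ℝ) :=
  Submodule.span ℝ {h : SchwartzMap ℝ ℝ |
    ∃ f : SchwartzMap ℝ ℝ, ∀ x : ℝ, h x = x * deriv f x}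

open Set
open scoped ContDiff SchwartzMap

section ParametricIntegral

variable {F : Type*} [NormedAddCommGroup F] [NormedSpace ℝ F] {f : ℝ → ℝ → F} {a b : ℝ}

lemma hasDerivAt_fst_of_differentiableAt_uncurry {x t : ℝ}
    (hf : DifferentiableAt ℝ (Function.uncurry f) (x, t)) :
    HasDerivAt (fun y => f y t) (fderiv ℝ (Function.uncurry f) (x, t) (1, 0)) x :=
  HasFDerivAt.comp_hasDerivAt (f := fun y => (y, t)) x hf.hasFDerivAt
    ((hasDerivAt_id x).prodMk (hasDerivAt_const x t))

lemma hasDerivAt_intervalIntegral_of_contDiff (hf : ContDiff ℝ 1 (Function.uncurry f)) (x : ℝ) :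
    HasDerivAt (fun y => ∫ t in a..b, f y t)
      (∫ t in a..b, fderiv ℝ (Function.uncurry f) (x, t) (1, 0)) x := by
  have hf_cont : ∀ y, Continuous (f y) := fun y => hf.continuous.comp (.prodMk_right y)
  have hf'_cont : Continuous fun p => fderiv ℝ (Function.uncurry f) p (1, 0) :=
    (hf.continuous_fderiv one_ne_zero).clm_apply continuous_const
  obtain ⟨C, hC⟩ := ((isCompact_closedBall x 1).prod (isCompact_uIcc (a := a) (b := b))
    ).exists_bound_of_continuousOn hf'_cont.continuousOn
  refine (intervalIntegral.hasDerivAt_integral_of_dominated_loc_of_deriv_le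
    (F' := fun y t => fderiv ℝ (Function.uncurry f) (y, t) (1, 0))
    (bound := fun _ => C) (Metric.closedBall_mem_nhds x one_pos)
    (.of_forall fun y => (hf_cont y).aestronglyMeasurable) ((hf_cont x).intervalIntegrable a b)
    (hf'_cont.comp (.prodMk_right x)).aestronglyMeasurable
    (.of_forall fun t ht y hy => hC (y, t) ⟨hy, uIoc_subset_uIcc ht⟩)
    intervalIntegrable_const (.of_forall fun t _ y _ => ?_)).2
  exact hasDerivAt_fst_of_differentiableAt_uncurry (hf.differentiable one_ne_zero _)

lemma contDiff_intervalIntegral {n : ℕ∞} (hf : ContDiff ℝ n (Function.uncurry f)) :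
    ContDiff ℝ n fun x => ∫ t in a..b, f x t := by
  rw [contDiff_iff_forall_nat_le] at hf ⊢
  intro m hm
  specialize hf m hm
  clear hm
  induction m generalizing f with
  | zero =>
    exact contDiff_zero.2 <| intervalIntegral.continuous_parametric_intervalIntegral_of_continuous'
      hf.continuous a b
  | succ m ih =>
    have hderiv := hasDerivAt_intervalIntegral_of_contDiff (a := a) (b := b)
      (hf.of_le (mod_cast m.succ_pos))
    push_cast
    refine contDiff_succ_iff_deriv.2
      ⟨fun x => (hderiv x).differentiableAt, fun hω => absurd hω (by simp), ?_⟩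
    rw [funext fun x => (hderiv x).deriv]
    exact ih ((hf.fderiv_right le_rfl).clm_apply contDiff_const)

end ParametricIntegral

section IdSmul

variable {𝕜 F : Type*} [NontriviallyNormedField 𝕜] [NormedAddCommGroup F] [NormedSpace 𝕜 F]
  {h : 𝕜 → F} {n : ℕ} {x : 𝕜}

lemma iteratedDeriv_succ_id_smul (hh : ContDiffAt 𝕜 (n + 1) h x) :
    iteratedDeriv (n + 1) (fun y => y • h y) x =
      x • iteratedDeriv (n + 1) h x + (n + 1) • iteratedDeriv n h x := by
  have leibniz := iteratedDerivWithin_smul (n := n + 1) (f := id) (g := h) (mem_univ x)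
    uniqueDiffOn_univ contDiffWithinAt_id (contDiffWithinAt_univ.2 (mod_cast hh))
  simp only [iteratedDerivWithin_univ, iteratedDeriv_id, Finset.sum_range_succ'] at leibniz
  simpa [Pi.smul_def', add_comm] using leibniz

lemma norm_iteratedDeriv_succ_le_of_one_le_norm (hh : ContDiffAt 𝕜 (n + 1) h x) (hx : 1 ≤ ‖x‖) :
    ‖iteratedDeriv (n + 1) h x‖ ≤
      ‖iteratedDeriv (n + 1) (fun y => y • h y) x‖ + (n + 1) * ‖iteratedDeriv n h x‖ := by
  calc ‖iteratedDeriv (n + 1) h x‖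
    _ ≤ ‖x • iteratedDeriv (n + 1) h x‖ := by
      rw [norm_smul]
      exact le_mul_of_one_le_left (norm_nonneg _) hx
    _ = ‖iteratedDeriv (n + 1) (fun y => y • h y) x - (n + 1) • iteratedDeriv n h x‖ := by
      rw [iteratedDeriv_succ_id_smul hh, add_sub_cancel_right]
    _ ≤ _ := (norm_sub_le _ _).trans (by gcongr; exact mod_cast norm_nsmul_le)

end IdSmul

lemma exists_forall_le_of_isCompact {X α : Type*} [TopologicalSpace X] [LinearOrder α]
    [TopologicalSpace α] [ClosedIciTopology α] {φ : X → α} {K : Set X} {C : α}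
    (hK : IsCompact K) (hφ : ContinuousOn φ K) (hC : ∀ x ∉ K, φ x ≤ C) :
    ∃ C', ∀ x, φ x ≤ C' := by
  have : Nonempty α := ⟨C⟩
  obtain ⟨M, hM⟩ := hK.bddAbove_image hφ
  refine ⟨max M C, fun x => ?_⟩
  by_cases hx : x ∈ K
  · exact le_max_of_le_left (hM ⟨x, hx, rfl⟩)
  · exact le_max_of_le_right (hC x hx)

section Hadamard

variable {F : Type*} [NormedAddCommGroup F] [NormedSpace ℝ F]

lemma exists_contDiff_eq_id_smul [CompleteSpace F] {g : ℝ → F} {n : ℕ∞}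
    (hg : ContDiff ℝ (n + 1) g) (hg0 : g 0 = 0) :
    ∃ h : ℝ → F, ContDiff ℝ n h ∧ ∀ x, g x = x • h x := by
  have hg' : ContDiff ℝ n (deriv g) := (contDiff_succ_iff_deriv.1 hg).2.2
  refine ⟨fun x => ∫ t in (0 : ℝ)..1, deriv g (t * x),
    contDiff_intervalIntegral (hg'.comp (contDiff_snd.mul contDiff_fst)), fun x => ?_⟩
  have := intervalIntegral.integral_unitInterval_deriv_eq_sub (f := g) (f' := deriv g)
    (z₀ := 0) (z₁ := x) (hg'.continuous.comp (by fun_prop)).continuousOn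
    fun t _ => (hg.differentiable (by simp) _).hasDerivAt
  simpa [hg0] using this.symm

/-- Outside `[-1, 1]`, the Leibniz rule bounds `h⁽ⁿ⁺¹⁾` by `(x h)⁽ⁿ⁺¹⁾` and `h⁽ⁿ⁾`. -/
lemma exists_norm_pow_mul_norm_iteratedDeriv_le {g : 𝓢(ℝ, F)} {h : ℝ → F} (hh : ContDiff ℝ ∞ h)
    (hgh : ∀ x, g x = x • h x) (k n : ℕ) :
    ∃ C, ∀ x, ‖x‖ ^ k * ‖iteratedDeriv n h x‖ ≤ C := by
  have hg : (fun x => x • h x) = g := (funext hgh).symm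
  have hcont (n : ℕ) : Continuous fun x => ‖x‖ ^ k * ‖iteratedDeriv n h x‖ :=
    (continuous_norm.pow k).mul (hh.continuous_iteratedDeriv n (mod_cast le_top)).norm
  have one_le_norm {x : ℝ} (hx : x ∉ Metric.closedBall 0 1) : 1 ≤ ‖x‖ := by
    simpa using (not_le.1 (mt mem_closedBall_zero_iff.2 hx)).le
  induction n with
  | zero =>
    refine exists_forall_le_of_isCompact (isCompact_closedBall 0 1) (hcont 0).continuousOn
      (C := SchwartzMap.seminorm ℝ k 0 g) fun x hx => ?_
    have hle : ‖h x‖ ≤ ‖g x‖ := by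
      rw [hgh, norm_smul]
      exact le_mul_of_one_le_left (norm_nonneg _) (one_le_norm hx)
    calc ‖x‖ ^ k * ‖iteratedDeriv 0 h x‖
      _ ≤ ‖x‖ ^ k * ‖g x‖ := by rw [iteratedDeriv_zero]; gcongr
      _ ≤ _ := g.norm_pow_mul_le_seminorm ℝ k x
  | succ n ih =>
    obtain ⟨C, hC⟩ := ih
    refine exists_forall_le_of_isCompact (isCompact_closedBall 0 1) (hcont (n + 1)).continuousOn
      (C := SchwartzMap.seminorm ℝ k (n + 1) g + (n + 1) * C) fun x hx => ?_
    have hle := norm_iteratedDeriv_succ_le_of_one_le_norm (n := n)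
      (hh.contDiffAt.of_le (mod_cast le_top)) (one_le_norm hx)
    rw [hg] at hle
    calc ‖x‖ ^ k * ‖iteratedDeriv (n + 1) h x‖
      _ ≤ ‖x‖ ^ k * (‖iteratedDeriv (n + 1) g x‖ + (n + 1) * ‖iteratedDeriv n h x‖) := by gcongr
      _ = ‖x‖ ^ k * ‖iteratedDeriv (n + 1) g x‖ +
          (n + 1) * (‖x‖ ^ k * ‖iteratedDeriv n h x‖) := by ring
      _ ≤ _ := by gcongr; exacts [g.le_seminorm' ℝ k (n + 1) x, hC x]

lemma exists_schwartzMap_eq_id_smul_iff [CompleteSpace F] (g : 𝓢(ℝ, F)) :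
    (∃ h : 𝓢(ℝ, F), ∀ x, g x = x • h x) ↔ g 0 = 0 := by
  refine ⟨fun ⟨h, hgh⟩ => by simp [hgh], fun hg0 => ?_⟩
  obtain ⟨h, hh, hgh⟩ := exists_contDiff_eq_id_smul (n := ⊤) (g.smooth ⊤) hg0
  refine ⟨⟨h, hh, fun k n => ?_⟩, hgh⟩
  simpa only [norm_iteratedFDeriv_eq_norm_iteratedDeriv] using
    exists_norm_pow_mul_norm_iteratedDeriv_le hh hgh k n

end Hadamard

section Primitive

variable {F : Type*} [NormedAddCommGroup F] [NormedSpace ℝ F]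

lemma hasDerivAt_integral_Iic [CompleteSpace F] {f : ℝ → F} (hf : Continuous f)
    (hf_int : Integrable f) (x : ℝ) : HasDerivAt (fun y => ∫ t in Iic y, f t) (f x) x := by
  have hsplit (y : ℝ) : ∫ t in Iic y, f t = (∫ t in Iic 0, f t) + ∫ t in (0 : ℝ)..y, f t := by
    rw [← intervalIntegral.integral_Iic_sub_Iic hf_int.integrableOn hf_int.integrableOn,
      add_sub_cancel]
  rw [funext hsplit]
  exact (hf.integral_hasStrictDerivAt 0 x).hasDerivAt.const_add _

lemma pow_mul_norm_setIntegral_le {E : Type*} [NormedAddCommGroup E] [MeasurableSpace E]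
    {μ : Measure E} {f : E → F} {k : ℕ} {r : ℝ} {s : Set E}
    (hf : Integrable (fun t => ‖t‖ ^ k * ‖f t‖) μ) (hs : MeasurableSet s) (hr : 0 ≤ r)
    (hrs : ∀ t ∈ s, r ≤ ‖t‖) : r ^ k * ‖∫ t in s, f t ∂μ‖ ≤ ∫ t, ‖t‖ ^ k * ‖f t‖ ∂μ :=
  calc r ^ k * ‖∫ t in s, f t ∂μ‖
    _ = ‖∫ t in s, r ^ k • f t ∂μ‖ := by
      rw [integral_smul, norm_smul, norm_pow, Real.norm_of_nonneg hr]
    _ ≤ ∫ t in s, ‖t‖ ^ k * ‖f t‖ ∂μ := by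
      refine norm_integral_le_of_norm_le hf.integrableOn <|
        ae_restrict_of_forall_mem hs fun t ht => ?_
      rw [norm_smul, norm_pow, Real.norm_of_nonneg hr]
      gcongr
      exact hrs t ht
    _ ≤ _ := setIntegral_le_integral hf (.of_forall fun t => by positivity)

lemma norm_pow_mul_norm_integral_Iic_le {f : ℝ → F} {k : ℕ} (hf : Integrable f)
    (hf_pow : Integrable fun t => ‖t‖ ^ k * ‖f t‖) (hf_zero : ∫ t, f t = 0) (x : ℝ) :
    ‖x‖ ^ k * ‖∫ t in Iic x, f t‖ ≤ ∫ t, ‖t‖ ^ k * ‖f t‖ := by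
  rcases le_total x 0 with hx | hx
  · refine pow_mul_norm_setIntegral_le hf_pow measurableSet_Iic (norm_nonneg x) fun t ht => ?_
    exact abs_le_abs_of_nonpos hx ht
  · have hIic : ∫ t in Iic x, f t = -∫ t in Ioi x, f t := by
      rw [eq_neg_iff_add_eq_zero, ← compl_Iic, integral_add_compl measurableSet_Iic hf, hf_zero]
    rw [hIic, norm_neg]
    refine pow_mul_norm_setIntegral_le hf_pow measurableSet_Ioi (norm_nonneg x) fun t ht => ?_
    exact abs_le_abs_of_nonneg hx (le_of_lt ht)

lemma exists_schwartzMap_deriv_eq_iff [CompleteSpace F] (h : 𝓢(ℝ, F)) :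
    (∃ f : 𝓢(ℝ, F), ∀ x, deriv f x = h x) ↔ ∫ x, h x = 0 := by
  refine ⟨fun ⟨f, hf⟩ => ?_, fun h_zero => ?_⟩
  · exact integral_eq_zero_of_hasDerivAt_of_integrable (fun x => hf x ▸ f.hasDerivAt x)
      h.integrable f.integrable
  have hderiv := hasDerivAt_integral_Iic h.continuous h.integrable
  have hderiv_eq := funext fun x => (hderiv x).deriv
  refine ⟨⟨fun x => ∫ t in Iic x, h t, ?_, fun k n => ?_⟩, fun x => (hderiv x).deriv⟩
  · exact contDiff_infty_iff_deriv.2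
      ⟨fun x => (hderiv x).differentiableAt, by rw [hderiv_eq]; exact h.smooth ⊤⟩
  · simp only [norm_iteratedFDeriv_eq_norm_iteratedDeriv]
    cases n with
    | zero =>
      exact ⟨_, norm_pow_mul_norm_integral_Iic_le h.integrable (h.integrable_pow_mul volume k)
        h_zero⟩
    | succ n =>
      refine ⟨SchwartzMap.seminorm ℝ k n h, fun x => ?_⟩
      rw [iteratedDeriv_succ', hderiv_eq]
      exact h.le_seminorm' ℝ k n x

end Primitive

section PrincipalValue

variable {F : Type*} [NormedAddCommGroup F] [NormedSpace ℝ F]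

lemma norm_inv_smul_sub_comp_neg_le (g : 𝓢(ℝ, F)) (x : ℝ) :
    ‖x⁻¹ • (g x - g (-x))‖ ≤
      2 * (SchwartzMap.seminorm ℝ 0 1 g + SchwartzMap.seminorm ℝ 1 0 g) * (1 + x ^ 2)⁻¹ := by
  rcases eq_or_ne x 0 with rfl | hx
  · simpa using add_nonneg (apply_nonneg (SchwartzMap.seminorm ℝ 0 1) g) (apply_nonneg _ g)
  have h_near : ‖g x - g (-x)‖ ≤ 2 * SchwartzMap.seminorm ℝ 0 1 g * ‖x‖ := by
    have := convex_univ.norm_image_sub_le_of_norm_deriv_le (x := -x) (y := x)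
      (fun y _ => g.differentiableAt)
      (fun y _ => by simpa using g.le_seminorm' ℝ 0 1 y) trivial trivial
    refine this.trans_eq ?_
    rw [sub_neg_eq_add, ← two_mul, norm_mul, Real.norm_two]
    ring
  have h_far : ‖x‖ * ‖g x - g (-x)‖ ≤ 2 * SchwartzMap.seminorm ℝ 1 0 g := by
    have h₁ := g.norm_pow_mul_le_seminorm ℝ 1 x
    have h₂ := g.norm_pow_mul_le_seminorm ℝ 1 (-x)
    rw [pow_one] at h₁ h₂
    rw [norm_neg] at h₂
    nlinarith [norm_sub_le (g x) (g (-x)), norm_nonneg x]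
  have hx' : 0 < ‖x‖ := norm_pos_iff.2 hx
  rw [norm_smul, norm_inv, ← div_eq_inv_mul, ← div_eq_mul_inv, div_le_div_iff₀ hx' (by positivity),
    ← sq_abs, ← Real.norm_eq_abs]
  nlinarith

lemma integrable_inv_smul_sub_comp_neg (g : 𝓢(ℝ, F)) :
    Integrable fun x : ℝ => x⁻¹ • (g x - g (-x)) := by
  refine (integrable_inv_one_add_sq.const_mul _).mono' ?_
    (.of_forall (norm_inv_smul_sub_comp_neg_le g))
  exact measurable_inv.aestronglyMeasurable.smul
    (g.continuous.sub (g.continuous.comp continuous_neg)).aestronglyMeasurable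

lemma norm_integral_inv_smul_sub_comp_neg_le (g : 𝓢(ℝ, F)) :
    ‖∫ x : ℝ, x⁻¹ • (g x - g (-x))‖ ≤
      2 * (SchwartzMap.seminorm ℝ 0 1 g + SchwartzMap.seminorm ℝ 1 0 g) * Real.pi := by
  rw [← integral_univ_inv_one_add_sq, ← integral_const_mul]
  exact norm_integral_le_of_norm_le (integrable_inv_one_add_sq.const_mul _)
    (.of_forall (norm_inv_smul_sub_comp_neg_le g))

variable (F) in
/-- The distribution `p.v. 1/x`. The principal value of `∫ g(x)/x dx` is encoded as the absolutely
convergent integral of the even part `(g(x) - g(-x)) / (2x)` of `g(x)/x`. -/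
noncomputable def principalValueInv : 𝓢(ℝ, F) →L[ℝ] F :=
  (2 : ℝ)⁻¹ • SchwartzMap.mkCLMtoNormedSpace (fun g => ∫ x : ℝ, x⁻¹ • (g x - g (-x)))
    (fun f g => by
      rw [← integral_add (integrable_inv_smul_sub_comp_neg f) (integrable_inv_smul_sub_comp_neg g)]
      simp only [add_apply, ← smul_add, add_sub_add_comm])
    (fun c g => by
      rw [RingHom.id_apply, ← integral_smul]
      simp only [smul_apply, ← smul_sub, smul_comm c])
    (by
      refine ⟨{(0, 1), (1, 0)}, 4 * Real.pi, by positivity, fun g => ?_⟩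
      have h_sup (i : ℕ × ℕ) (hi : i ∈ ({(0, 1), (1, 0)} : Finset (ℕ × ℕ))) :
          SchwartzMap.seminorm ℝ i.1 i.2 g ≤ _ :=
        Seminorm.le_finset_sup_apply (p := schwartzSeminormFamily ℝ ℝ F) hi
      refine (norm_integral_inv_smul_sub_comp_neg_le g).trans ?_
      nlinarith [Real.pi_pos, h_sup (0, 1) (by simp), h_sup (1, 0) (by simp)])

lemma principalValueInv_apply (g : 𝓢(ℝ, F)) :
    principalValueInv F g = (2 : ℝ)⁻¹ • ∫ x : ℝ, x⁻¹ • (g x - g (-x)) :=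
  rfl

lemma principalValueInv_of_even {g : 𝓢(ℝ, F)} (hg : ∀ x, g (-x) = g x) :
    principalValueInv F g = 0 := by
  simp [principalValueInv_apply, hg]

lemma integral_inv_smul_eq_of_eq_id_smul {g h : ℝ → F} (hgh : ∀ x, g x = x • h x) :
    ∫ x, x⁻¹ • g x = ∫ x, h x := by
  refine integral_congr_ae ?_
  filter_upwards [Measure.ae_ne volume 0] with x hx
  rw [hgh, inv_smul_smul₀ hx]

lemma principalValueInv_eq_of_eq_id_smul {g h : 𝓢(ℝ, F)} (hgh : ∀ x, g x = x • h x) :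
    principalValueInv F g = ∫ x, h x := by
  have hodd (x : ℝ) : g x - g (-x) = x • (h x + h (-x)) := by
    rw [hgh, hgh, neg_smul, sub_neg_eq_add, smul_add]
  rw [principalValueInv_apply, integral_inv_smul_eq_of_eq_id_smul hodd,
    integral_add h.integrable h.integrable.comp_neg, integral_neg_eq_self (f := h), ← two_smul ℝ,
    inv_smul_smul₀ two_ne_zero]

lemma principalValueInv_eq_integral_inv_smul [CompleteSpace F] {g : 𝓢(ℝ, F)} (hg : g 0 = 0) :
    principalValueInv F g = ∫ x : ℝ, x⁻¹ • g x := by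
  obtain ⟨h, hgh⟩ := (exists_schwartzMap_eq_id_smul_iff g).2 hg
  rw [principalValueInv_eq_of_eq_id_smul hgh, integral_inv_smul_eq_of_eq_id_smul hgh]

end PrincipalValue

section EulerOperator

variable {F : Type*} [NormedAddCommGroup F] [NormedSpace ℝ F]

variable (F) in
/-- The Euler operator `x d/dx` on Schwartz functions on the line. -/
noncomputable def eulerOperator : 𝓢(ℝ, F) →L[ℝ] 𝓢(ℝ, F) :=
  SchwartzMap.smulLeftCLM F (fun x : ℝ => x) ∘L SchwartzMap.derivCLM ℝ F

lemma eulerOperator_apply (f : 𝓢(ℝ, F)) (x : ℝ) : eulerOperator F f x = x • deriv f x :=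
  SchwartzMap.smulLeftCLM_apply_apply .id' _ x

lemma mem_range_eulerOperator_iff {g : 𝓢(ℝ, F)} :
    g ∈ (eulerOperator F).range ↔ ∃ f : 𝓢(ℝ, F), ∀ x, g x = x • deriv f x := by
  simp only [LinearMap.mem_range, ContinuousLinearMap.coe_coe, SchwartzMap.ext_iff,
    eulerOperator_apply, eq_comm]

lemma eulerOperatorRange_eq_range : eulerOperatorRange = (eulerOperator ℝ).range := by
  rw [eulerOperatorRange, ← Submodule.span_eq (eulerOperator ℝ).range]
  exact congrArg _ (Set.ext fun g => mem_range_eulerOperator_iff.symm)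

variable (F) in
/-- The two obstructions `g(0)` and `p.v. ∫ g(x)/x dx` to solving `x f' = g`. -/
noncomputable def eulerObstruction : 𝓢(ℝ, F) →L[ℝ] F × F :=
  (BoundedContinuousFunction.evalCLM ℝ 0 ∘L
    SchwartzMap.toBoundedContinuousFunctionCLM ℝ ℝ F).prod (principalValueInv F)

lemma eulerObstruction_apply (g : 𝓢(ℝ, F)) :
    eulerObstruction F g = (g 0, principalValueInv F g) :=
  rfl

lemma mem_ker_eulerObstruction_iff [CompleteSpace F] {g : 𝓢(ℝ, F)} :
    g ∈ (eulerObstruction F).ker ↔ g 0 = 0 ∧ ∫ x : ℝ, x⁻¹ • g x = 0 := by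
  rw [LinearMap.mem_ker, ContinuousLinearMap.coe_coe, eulerObstruction_apply, Prod.mk_eq_zero]
  exact and_congr_right fun hg => by rw [principalValueInv_eq_integral_inv_smul hg]

theorem range_eulerOperator [CompleteSpace F] :
    (eulerOperator F).range = (eulerObstruction F).ker := by
  ext g
  rw [mem_range_eulerOperator_iff, mem_ker_eulerObstruction_iff]
  constructor
  · rintro ⟨f, hgf⟩
    refine ⟨by simp [hgf], ?_⟩
    rw [integral_inv_smul_eq_of_eq_id_smul hgf]
    exact (exists_schwartzMap_deriv_eq_iff (SchwartzMap.derivCLM ℝ F f)).1 ⟨f, fun x => rfl⟩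
  · rintro ⟨hg0, hg_int⟩
    obtain ⟨h, hgh⟩ := (exists_schwartzMap_eq_id_smul_iff g).2 hg0
    rw [integral_inv_smul_eq_of_eq_id_smul hgh] at hg_int
    obtain ⟨f, hf⟩ := (exists_schwartzMap_deriv_eq_iff h).2 hg_int
    exact ⟨f, fun x => by rw [hgh, hf]⟩

lemma exists_even_schwartzMap :
    ∃ φ : 𝓢(ℝ, ℝ), φ 0 = 1 ∧ (∀ x, φ (-x) = φ x) ∧ ∫ x, φ x ≠ 0 := by
  let b : ContDiffBump (0 : ℝ) := ⟨1, 2, one_pos, one_lt_two⟩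
  exact ⟨b.hasCompactSupport.toSchwartzMap b.contDiff,
    b.one_of_mem_closedBall (Metric.mem_closedBall_self b.rIn_pos.le), b.neg, b.integral_pos.ne'⟩

lemma eulerObstruction_surjective [CompleteSpace F] :
    Function.Surjective (eulerObstruction F) := by
  obtain ⟨φ, hφ0, hφ_even, hφ_int⟩ := exists_even_schwartzMap
  let tensor (v : F) : 𝓢(ℝ, F) := SchwartzMap.postcompCLM (.toSpanSingleton ℝ v) φ
  let idTensor (v : F) : 𝓢(ℝ, F) := SchwartzMap.smulLeftCLM F (fun x : ℝ => x) (tensor v)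
  have h_id (v : F) (x : ℝ) : idTensor v x = x • tensor v x :=
    SchwartzMap.smulLeftCLM_apply_apply .id' _ x
  have h_tensor (v : F) : eulerObstruction F (tensor v) = (v, 0) := by
    rw [eulerObstruction_apply, principalValueInv_of_even fun x => by simp [tensor, hφ_even]]
    simp [tensor, hφ0]
  have h_idTensor (v : F) : eulerObstruction F (idTensor v) = (0, (∫ x, φ x) • v) := by
    rw [eulerObstruction_apply, principalValueInv_eq_of_eq_id_smul (h_id v), h_id, zero_smul,
      ← integral_smul_const]
    rfl
  rintro ⟨v, w⟩
  refine ⟨tensor v + idTensor ((∫ x, φ x)⁻¹ • w), ?_⟩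
  rw [map_add, h_tensor, h_idTensor, smul_inv_smul₀ hφ_int, Prod.mk_add_mk, add_zero, zero_add]

end EulerOperator

theorem schwartz_euler_operator_range_general (F : Type*) [NormedAddCommGroup F] [NormedSpace ℝ F]
    [CompleteSpace F] :
    (∀ g : 𝓢(ℝ, F), (∃ f : 𝓢(ℝ, F), ∀ x : ℝ, g x = x • deriv f x) ↔
      g 0 = 0 ∧ ∫ x : ℝ, x⁻¹ • g x = 0) ∧
    IsClosed ((eulerOperator F).range : Set 𝓢(ℝ, F)) ∧
    Nonempty ((𝓢(ℝ, F) ⧸ (eulerOperator F).range) ≃ₗ[ℝ] F × F) := by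
  refine ⟨fun g => ?_, ?_, ?_⟩
  · rw [← mem_range_eulerOperator_iff, range_eulerOperator, mem_ker_eulerObstruction_iff]
  · rw [range_eulerOperator]
    exact (eulerObstruction F).isClosed_ker
  · rw [range_eulerOperator]
    exact ⟨(eulerObstruction F).toLinearMap.quotKerEquivOfSurjective eulerObstruction_surjective⟩

/-- Let `g ∈ 𝒮(ℝ)`.  There exists a Schwartz function `f` with `g(x) = x·f′(x)` if and
only if `g(0) = 0` and `∫ g(x)/x dx = 0`.  Consequently `{x ↦ x·f′(x) : f ∈ 𝒮(ℝ)}` is a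
closed subspace of `𝒮(ℝ)` of codimension two.  (This is an instance of the main
theorem for the scaling action of the multiplicative group on `ℝ`, with orbits
`{0}`, `ℝ₊`, `ℝ₋`, the Lie algebra acting by the Euler operator `x d/dx`.) -/
theorem schwartz_euler_operator_range :
    (∀ g : SchwartzMap ℝ ℝ,
      (∃ f : SchwartzMap ℝ ℝ, ∀ x : ℝ, g x = x * deriv f x) ↔
        (g 0 = 0 ∧ (∫ x : ℝ, g x / x) = 0)) ∧
    IsClosed ((eulerOperatorRange : Submodule ℝ (SchwartzMap ℝ ℝ)) :
      Set (SchwartzMap ℝ ℝ)) ∧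
    Module.finrank ℝ (SchwartzMap ℝ ℝ ⧸ eulerOperatorRange) = 2 := by
  obtain ⟨h_iff, h_closed, ⟨e⟩⟩ := schwartz_euler_operator_range_general ℝ
  rw [eulerOperatorRange_eq_range]
  exact ⟨by simpa only [smul_eq_mul, ← div_eq_inv_mul] using h_iff, h_closed, by
    simp [e.finrank_eq]⟩
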